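/- A numerical semigroup S is a MANS-semigroup with embedding dimension e(S) = 3 if and only if S = ⟨m, am+1, bm+t⟩ for some natural numbers m, a, b, t with m ≥ 3, a ≥ 1, t ∈ {2, …, m−1}, and (t−1)(am+1) < bm+t < t(am+1). -/

import Mathlib

/-- `S ⊆ ℕ` is a numerical semigroup: contains `0`, closed under addition,
and has finite complement in `ℕ`. -/
def IsNumSgp (S : Set ℕ) : Prop :=
  0 ∈ S ∧ (∀ a ∈ S, ∀ b ∈ S, a + b ∈ S) ∧ Sᶜ.Finite

/-- `⟨A⟩`: the additive submonoid of `ℕ` generated by `A`, viewed as a set. -/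
def gen (A : Set ℕ) : Set ℕ := (AddSubmonoid.closure A : Set ℕ)

/-- The multiplicity `m(S)`: the least nonzero element of `S`. -/
noncomputable def nsMult (S : Set ℕ) : ℕ := sInf {x | x ∈ S ∧ x ≠ 0}

/-- The minimal system of generators of `S`: the nonzero elements of `S` that are
not a sum of two nonzero elements of `S`. -/
def msg (S : Set ℕ) : Set ℕ :=
  {x | x ∈ S ∧ x ≠ 0 ∧ ∀ a ∈ S, a ≠ 0 → ∀ b ∈ S, b ≠ 0 → x ≠ a + b}

/-- The ratio `r(S)`: the second smallest minimal generator of `S`. -/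
noncomputable def nsRatio (S : Set ℕ) : ℕ := sInf (msg S \ {nsMult S})

/-- The maximum minimal generator `M(S)`. -/
noncomputable def nsMaxGen (S : Set ℕ) : ℕ := sSup (msg S)

/-- The Apéry set `Ap(S, n) = {s ∈ S : s - n ∉ S}`. -/
def AperySet (S : Set ℕ) (n : ℕ) : Set ℕ :=
  {s | s ∈ S ∧ ¬ ∃ y ∈ S, y + n = s}

/-- `w(i)`: the least element of `S` congruent to `i` modulo `n`. -/
noncomputable def aperyW (S : Set ℕ) (n i : ℕ) : ℕ :=
  sInf {s | s ∈ S ∧ s % n = i % n}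

/-- A MANS-semigroup: a numerical semigroup whose Apéry set with respect to the
multiplicity is monotone, i.e. `w(1) < w(2) < ⋯ < w(m(S) - 1)`. -/
def IsMANS (S : Set ℕ) : Prop :=
  IsNumSgp S ∧ ∀ i : ℕ, 0 < i → i + 1 < nsMult S →
    aperyW S (nsMult S) i < aperyW S (nsMult S) (i + 1)

/-- The Frobenius number `F(S)`: the greatest integer not in `S`. -/
noncomputable def nsFrob (S : Set ℕ) : ℕ := sSup {x | x ∉ S}

/-- The genus `g(S)`: the number of gaps of `S`. -/
noncomputable def nsGenus (S : Set ℕ) : ℕ := Set.ncard {x | x ∉ S}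

/-- The set of pseudo-Frobenius numbers of `S`: integers `x ∉ S` such that
`x + s ∈ S` for every nonzero `s ∈ S`. -/
def nsPF (S : Set ℕ) : Set ℤ :=
  {x : ℤ | x ∉ ((Nat.cast : ℕ → ℤ) '' S) ∧
    ∀ s ∈ S, s ≠ 0 → x + (s : ℤ) ∈ ((Nat.cast : ℕ → ℤ) '' S)}

/-- The type `t(S)`: the number of pseudo-Frobenius numbers of `S`. -/
noncomputable def nsType (S : Set ℕ) : ℕ := (nsPF S).ncard

/-- `S` is pseudo-symmetric iff `F(S) = 2 g(S) - 2`. -/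
def IsPseudoSymmetric (S : Set ℕ) : Prop :=
  (nsFrob S : ℤ) = 2 * (nsGenus S : ℤ) - 2

theorem mem_gen3 (m g h n : ℕ) :
    n ∈ gen {m, g, h} ↔ ∃ x y z : ℕ, n = x * m + y * g + z * h := by
  constructor
  · intro hn
    change n ∈ AddSubmonoid.closure ({m, g, h} : Set ℕ) at hn
    induction hn using AddSubmonoid.closure_induction with
    | mem x hx =>
      rcases hx with rfl | rfl | rfl
      · exact ⟨1, 0, 0, by ring⟩
      · exact ⟨0, 1, 0, by ring⟩
      · exact ⟨0, 0, 1, by ring⟩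
    | zero => exact ⟨0, 0, 0, by ring⟩
    | add a b _ _ ha hb =>
      obtain ⟨x, y, z, rfl⟩ := ha
      obtain ⟨x', y', z', rfl⟩ := hb
      exact ⟨x + x', y + y', z + z', by ring⟩
  · rintro ⟨x, y, z, rfl⟩
    change _ ∈ AddSubmonoid.closure ({m, g, h} : Set ℕ)
    have h1 : m ∈ AddSubmonoid.closure ({m, g, h} : Set ℕ) :=
      AddSubmonoid.subset_closure (by simp)
    have h2 : g ∈ AddSubmonoid.closure ({m, g, h} : Set ℕ) :=
      AddSubmonoid.subset_closure (by simp)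
    have h3 : h ∈ AddSubmonoid.closure ({m, g, h} : Set ℕ) :=
      AddSubmonoid.subset_closure (by simp)
    have := add_mem (add_mem (nsmul_mem h1 x) (nsmul_mem h2 y)) (nsmul_mem h3 z)
    simpa [smul_eq_mul] using this

theorem msg_gen_subset (A : Set ℕ) : msg (gen A) ⊆ A := by
  intro x hx
  obtain ⟨hxS, hx0, hx⟩ := hx
  have key : ∀ y ∈ AddSubmonoid.closure A, y = 0 ∨ y ∈ A ∨
      ∃ a ∈ gen A, a ≠ 0 ∧ ∃ b ∈ gen A, b ≠ 0 ∧ y = a + b := by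
    intro y hy
    induction hy using AddSubmonoid.closure_induction with
    | mem x hx => exact Or.inr (Or.inl hx)
    | zero => exact Or.inl rfl
    | add a b ha hb iha ihb =>
      by_cases ha0 : a = 0
      · subst ha0; simpa using ihb
      · by_cases hb0 : b = 0
        · subst hb0; simpa using iha
        · exact Or.inr (Or.inr ⟨a, ha, ha0, b, hb, hb0, rfl⟩)
  rcases key x hxS with h | h | ⟨a, ha, ha0, b, hb, hb0, h⟩
  · exact absurd h hx0
  · exact h
  · exact absurd h (hx a ha ha0 b hb hb0)

theorem gen_msg (S : Set ℕ) (hS : IsNumSgp S) : S = gen (msg S) := by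
  obtain ⟨h0, hadd, -⟩ := hS
  ext x
  constructor
  · induction x using Nat.strong_induction_on with
    | _ x ih =>
      intro hx
      by_cases hx0 : x = 0
      · subst hx0; exact zero_mem (AddSubmonoid.closure (msg S))
      by_cases hm : x ∈ msg S
      · exact AddSubmonoid.subset_closure hm
      · have : ∃ a ∈ S, a ≠ 0 ∧ ∃ b ∈ S, b ≠ 0 ∧ x = a + b := by
          by_contra hcon
          apply hm
          refine ⟨hx, hx0, fun a ha ha0 b hb hb0 he => hcon ⟨a, ha, ha0, b, hb, hb0, he⟩⟩
        obtain ⟨a, ha, ha0, b, hb, hb0, he⟩ := this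
        rw [he]
        exact add_mem (S := AddSubmonoid ℕ) (ih a (by omega) ha) (ih b (by omega) hb)
  · intro hx
    change x ∈ AddSubmonoid.closure (msg S) at hx
    induction hx using AddSubmonoid.closure_induction with
    | mem x hx => exact hx.1
    | zero => exact h0
    | add a b _ _ ha hb => exact hadd a ha b hb

/-- candidate Apery function -/
def apf (t g h n : ℕ) : ℕ := (n / t) * h + (n % t) * g

theorem apf_step (t g h n : ℕ) (ht : 2 ≤ t) (hg : 0 < g) (h1 : (t - 1) * g < h) :
    apf t g h n < apf t g h (n + 1) := by
  unfold apf
  have hr := Nat.mod_lt n (show 0 < t by omega)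
  have hn := Nat.div_add_mod n t
  generalize n / t = q at *
  generalize n % t = r at *
  subst hn
  by_cases hc : r + 1 < t
  · have e1 : (t * q + r + 1) / t = q := by
      rw [add_assoc, Nat.mul_add_div (by omega), Nat.div_eq_of_lt hc]; rfl
    have e2 : (t * q + r + 1) % t = r + 1 := by
      rw [add_assoc, Nat.mul_add_mod, Nat.mod_eq_of_lt hc]
    rw [e1, e2]
    nlinarith
  · have hrt : t = r + 1 := by omega
    subst hrt
    have e0 : (r + 1) * q + r + 1 = (r + 1) * (q + 1) := by ring
    rw [e0, Nat.mul_div_cancel_left _ (by omega), Nat.mul_mod_right]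
    simp only [Nat.add_sub_cancel] at h1
    nlinarith

theorem apf_le (t g h y z : ℕ) (ht : 2 ≤ t) (h2 : h ≤ t * g) :
    apf t g h (y + z * t) ≤ y * g + z * h := by
  unfold apf
  rw [Nat.add_mul_div_right _ _ (by omega), Nat.add_mul_mod_self_right]
  have hn := Nat.div_add_mod y t
  generalize y / t = q at *
  generalize y % t = r at *
  subst hn
  nlinarith [Nat.mul_le_mul_left q h2]

theorem backward (m a b t : ℕ) (hm : 3 ≤ m) (ha : 1 ≤ a) (ht : 2 ≤ t) (htm : t ≤ m - 1)
    (h1 : (t - 1) * (a * m + 1) < b * m + t) (h2 : b * m + t < t * (a * m + 1)) :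
    IsMANS (gen {m, a * m + 1, b * m + t}) ∧
      (msg (gen {m, a * m + 1, b * m + t})).ncard = 3 := by
  have hgm : m < a * m + 1 := by nlinarith
  have hgmod : (a * m + 1) % m = 1 := by
    rw [Nat.mul_add_mod_self_right, Nat.mod_eq_of_lt (by omega)]
  have hhmod : (b * m + t) % m = t := by
    rw [Nat.mul_add_mod_self_right, Nat.mod_eq_of_lt (by omega)]
  have hcong : ∀ x y z : ℕ, (x * m + y * (a * m + 1) + z * (b * m + t)) % m
      = (y + z * t) % m := by
    intro x y z
    rw [show x * m + y * (a * m + 1) + z * (b * m + t)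
      = (y + z * t) + (x + y * a + z * b) * m by ring, Nat.add_mul_mod_self_right]
  generalize hg : a * m + 1 = g at *
  generalize hh : b * m + t = h at *
  have hgh : g < h := by
    have : 1 * g ≤ (t - 1) * g := Nat.mul_le_mul_right g (by omega)
    omega
  have hmin : ∀ x ∈ gen {m, g, h}, x ≠ 0 → m ≤ x := by
    intro n hn hn0
    obtain ⟨x, y, z, rfl⟩ := (mem_gen3 _ _ _ _).1 hn
    rcases Nat.eq_zero_or_pos x with rfl | hx
    · rcases Nat.eq_zero_or_pos y with rfl | hy
      · rcases Nat.eq_zero_or_pos z with rfl | hz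
        · simp at hn0
        · nlinarith
      · nlinarith
    · nlinarith
  have hmS : m ∈ gen {m, g, h} := (mem_gen3 _ _ _ _).2 ⟨1, 0, 0, by ring⟩
  have hgS : g ∈ gen {m, g, h} := (mem_gen3 _ _ _ _).2 ⟨0, 1, 0, by ring⟩
  have hhS : h ∈ gen {m, g, h} := (mem_gen3 _ _ _ _).2 ⟨0, 0, 1, by ring⟩
  have hmult : nsMult (gen {m, g, h}) = m := by
    apply le_antisymm
    · exact Nat.sInf_le ⟨hmS, by omega⟩
    · have hne : {x | x ∈ gen {m, g, h} ∧ x ≠ 0}.Nonempty := ⟨m, hmS, by omega⟩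
      have := Nat.sInf_mem hne
      exact hmin _ this.1 this.2
  have hmono : StrictMono (apf t g h) :=
    strictMono_nat_of_lt_succ (fun n => apf_step t g h n ht (by omega) h1)
  have hw : ∀ i, i < m → aperyW (gen {m, g, h}) m i = apf t g h i := by
    intro i hi
    have hmem : apf t g h i ∈ {s | s ∈ gen {m, g, h} ∧ s % m = i % m} := by
      refine ⟨(mem_gen3 _ _ _ _).2 ⟨0, i % t, i / t, by unfold apf; ring⟩, ?_⟩
      have := hcong 0 (i % t) (i / t)
      rw [Nat.mod_add_div'] at this
      rw [← this]
      congr 1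
      unfold apf; ring
    apply le_antisymm
    · exact Nat.sInf_le hmem
    · have hin := Nat.sInf_mem ⟨_, hmem⟩
      obtain ⟨hs, hmod⟩ := hin
      change apf t g h i ≤ sInf {s | s ∈ gen {m, g, h} ∧ s % m = i % m}
      generalize sInf {s | s ∈ gen {m, g, h} ∧ s % m = i % m} = s at *
      obtain ⟨x, y, z, rfl⟩ := (mem_gen3 _ _ _ _).1 hs
      rw [hcong, Nat.mod_eq_of_lt hi] at hmod
      have h3 : i ≤ y + z * t := by rw [← hmod]; exact Nat.mod_le _ _
      calc apf t g h i ≤ apf t g h (y + z * t) := hmono.monotone h3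
        _ ≤ y * g + z * h := apf_le t g h y z ht h2.le
        _ ≤ _ := by omega
  refine ⟨⟨⟨(mem_gen3 _ _ _ _).2 ⟨0, 0, 0, by ring⟩, ?_, ?_⟩, ?_⟩, ?_⟩
  · intro u hu v hv
    exact add_mem (S := AddSubmonoid ℕ) hu hv
  · apply (Set.finite_Iio (m * g)).subset
    intro n hn
    by_contra hcon
    apply hn
    simp only [Set.mem_Iio, not_lt] at hcon
    have hlt := Nat.mod_lt n (show 0 < m by omega)
    have hle : (n % m) * g ≤ n := le_trans (Nat.mul_le_mul_right g hlt.le) hcon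
    have hd : m ∣ n - (n % m) * g := by
      apply (Nat.modEq_iff_dvd' hle).1
      change (n % m * g) % m = n % m
      rw [Nat.mul_mod, hgmod]; simp
    obtain ⟨k, hk⟩ := hd
    exact (mem_gen3 _ _ _ _).2 ⟨k, n % m, 0, by rw [mul_comm k m]; omega⟩
  · rw [hmult]
    intro i hi hi'
    rw [hw i (by omega), hw (i + 1) hi']
    exact hmono (Nat.lt_succ_self i)
  · have hmsg : msg (gen {m, g, h}) = {m, g, h} := by
      apply Set.Subset.antisymm (msg_gen_subset _)
      rintro n (rfl | rfl | rfl)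
      · refine ⟨hmS, by omega, ?_⟩
        intro u hu hu0 v hv hv0 he
        have := hmin u hu hu0
        omega
      · refine ⟨hgS, by omega, ?_⟩
        intro u hu hu0 v hv hv0 he
        have small : ∀ u ∈ gen {m, n, h}, u < n → u % m = 0 := by
          intro u hu hlt
          obtain ⟨x, y, z, rfl⟩ := (mem_gen3 _ _ _ _).1 hu
          have hy : y = 0 := by
            by_contra hy
            have := Nat.mul_le_mul_right n (Nat.one_le_iff_ne_zero.2 hy)
            omega
          have hz : z = 0 := by
            by_contra hy
            have := Nat.mul_le_mul_right h (Nat.one_le_iff_ne_zero.2 hy)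
            omega
          subst hy hz
          simp
        have e1 := small u hu (by omega)
        have e2 := small v hv (by omega)
        rw [he, Nat.add_mod, e1, e2] at hgmod
        simp at hgmod
      · refine ⟨hhS, by omega, ?_⟩
        intro u hu hu0 v hv hv0 he
        have small : ∀ u ∈ gen {m, g, n}, u < n → ∃ x y, u = x * m + y * g := by
          intro u hu hlt
          obtain ⟨x, y, z, rfl⟩ := (mem_gen3 _ _ _ _).1 hu
          have hz : z = 0 := by
            by_contra hy
            have := Nat.mul_le_mul_right n (Nat.one_le_iff_ne_zero.2 hy)
            omega
          subst hz
          exact ⟨x, y, by ring⟩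
        obtain ⟨x, y, e1⟩ := small u hu (by omega)
        obtain ⟨x', y', e2⟩ := small v hv (by omega)
        have e3 : n = (x + x') * m + (y + y') * g + 0 * n := by
          rw [e1, e2] at he
          linarith
        have e4 := hcong (x + x') (y + y') 0
        rw [← e3, hhmod] at e4
        have e5 : t ≤ y + y' := by
          rw [e4]; simpa using Nat.mod_le (y + y') m
        have := Nat.mul_le_mul_right g e5
        omega
    rw [hmsg]
    apply Set.ncard_eq_three.2
    exact ⟨m, g, h, by omega, by omega, by omega, rfl⟩

theorem forward (S : Set ℕ) (hM : IsMANS S) (hc : (msg S).ncard = 3) :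
      ∃ m a b t : ℕ, 3 ≤ m ∧ 1 ≤ a ∧ 2 ≤ t ∧ t ≤ m - 1 ∧
        (t - 1) * (a * m + 1) < b * m + t ∧ b * m + t < t * (a * m + 1) ∧
        S = gen {m, a * m + 1, b * m + t} := by
  obtain ⟨hS, hmono⟩ := hM
  have hgen := gen_msg S hS
  obtain ⟨h0, hadd, hfin⟩ := hS
  have hcof : ∃ N, ∀ n, N ≤ n → n ∈ S := by
    obtain ⟨N, hN⟩ := hfin.bddAbove
    refine ⟨N + 1, fun n hn => ?_⟩
    by_contra hcon
    have := hN (show n ∈ Sᶜ from hcon)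
    omega
  obtain ⟨N, hN⟩ := hcof
  have hmm : nsMult S ∈ {x | x ∈ S ∧ x ≠ 0} :=
    Nat.sInf_mem ⟨N + 1, hN _ (by omega), by omega⟩
  have hmin : ∀ x ∈ S, x ≠ 0 → nsMult S ≤ x := fun x hx hx0 => Nat.sInf_le ⟨hx, hx0⟩
  generalize nsMult S = m at *
  obtain ⟨hmS, hm0⟩ := hmm
  have hmul : ∀ k, ∀ x ∈ S, k * x ∈ S := by
    intro k x hx
    induction k with
    | zero => simpa using h0
    | succ k ih => rw [Nat.succ_mul]; exact hadd _ ih _ hx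
  have hmmsg : m ∈ msg S := by
    refine ⟨hmS, hm0, ?_⟩
    intro u hu hu0 v hv hv0 he
    have := hmin u hu hu0
    omega
  -- congruent generators
  have hcg : ∀ x ∈ S, x ≠ 0 → ∀ y ∈ msg S, x % m = y % m → x ≤ y → x = y := by
    intro x hx hx0 y hy hxy hle
    obtain ⟨k, hk⟩ := (Nat.modEq_iff_dvd' hle).1 hxy
    by_contra hne
    refine hy.2.2 x hx hx0 (k * m) (hmul k m hmS) ?_ ?_
    · intro hz; rw [mul_comm] at hz; omega
    · rw [mul_comm]; omega
  have hm3 : 3 ≤ m := by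
    have hinj : Set.InjOn (fun x => x % m) (msg S) := by
      intro x hx y hy hxy
      rcases le_total x y with h | h
      · exact hcg x hx.1 hx.2.1 y hy hxy h
      · exact (hcg y hy.1 hy.2.1 x hx hxy.symm h).symm
    have h3 := Set.ncard_le_ncard_of_injOn (s := msg S) (t := (↑(Finset.range m) : Set ℕ))
      (fun x => x % m) (fun x _ => by simpa using Nat.mod_lt x (by omega)) hinj
      (Finset.finite_toSet _)
    rw [hc, Set.ncard_coe_finset, Finset.card_range] at h3
    exact h3
  have hwmem : ∀ i, i < m → aperyW S m i ∈ S ∧ aperyW S m i % m = i := by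
    intro i hi
    have hne : {s | s ∈ S ∧ s % m = i % m}.Nonempty :=
      ⟨i + N * m, hN _ (by nlinarith), by simp⟩
    have := Nat.sInf_mem hne
    refine ⟨this.1, ?_⟩
    have h5 := this.2
    rw [Nat.mod_eq_of_lt hi] at h5
    unfold aperyW
    rw [Nat.mod_eq_of_lt hi]
    exact h5
  have hwle : ∀ s ∈ S, aperyW S m (s % m) ≤ s := by
    intro s hs
    exact Nat.sInf_le ⟨hs, by simp⟩
  have hw1 : ∀ i, 1 ≤ i → i < m → aperyW S m 1 ≤ aperyW S m i := by
    intro i hi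
    induction i, hi using Nat.le_induction with
    | base => intro _; exact le_rfl
    | succ i hi ih =>
      intro hlt
      exact le_trans (ih (by omega)) (hmono i (by omega) hlt).le
  obtain ⟨hgS, hgmod⟩ := hwmem 1 (by omega)
  generalize hg : aperyW S m 1 = g at *
  have hg0 : g ≠ 0 := by rintro rfl; simp at hgmod
  have hgmsg : g ∈ msg S := by
    refine ⟨hgS, hg0, ?_⟩
    intro u hu hu0 v hv hv0 he
    by_cases hum : u % m = 0
    · have : v % m = 1 := by
        rw [he, Nat.add_mod, hum] at hgmod; simpa using hgmod
      have h6 := hwle v hv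
      rw [this] at h6
      omega
    · have h6 := hwle u hu
      have h7 := hw1 (u % m) (by omega) (Nat.mod_lt _ (by omega))
      omega
  have hmg : m ≠ g := by rintro rfl; simp at hgmod
  have hfinm : (msg S).Finite := Set.finite_of_ncard_ne_zero (by omega)
  have hex : ∃ h, msg S \ {m, g} = {h} := by
    apply Set.ncard_eq_one.1
    have hsub : ({m, g} : Set ℕ) ⊆ msg S := by
      rintro x (rfl | rfl)
      · exact hmmsg
      · exact hgmsg
    rw [Set.ncard_diff hsub, hc, Set.ncard_pair hmg]
  obtain ⟨h, hh⟩ := hex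
  have hhm : h ∈ msg S \ {m, g} := by rw [hh]; rfl
  have hhmsg := hhm.1
  have hhne : h ≠ m ∧ h ≠ g := by simpa [not_or] using hhm.2
  have hset : msg S = {m, g, h} := by
    ext x
    constructor
    · intro hx
      by_cases hx' : x ∈ ({m, g} : Set ℕ)
      · rcases hx' with rfl | rfl <;> simp
      · have : x ∈ msg S \ {m, g} := ⟨hx, hx'⟩
        rw [hh] at this
        rw [Set.mem_singleton_iff.1 this]; simp
    · rintro (rfl | rfl | rfl)
      · exact hmmsg
      · exact hgmsg
      · exact hhmsg
  rw [hset] at hgen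
  have htlt := Nat.mod_lt h (show 0 < m by omega)
  have hdh := Nat.div_add_mod' h m
  have hdg := Nat.div_add_mod' g m
  rw [hgmod] at hdg
  have ht0 : h % m ≠ 0 := by
    intro hz
    exact hhne.1 (hcg m hmS hm0 h hhmsg (by simp [hz]) (hmin h hhmsg.1 hhmsg.2.1)).symm
  have ht1 : h % m ≠ 1 := by
    intro hz
    have := hwle h hhmsg.1
    rw [hz, hg] at this
    exact hhne.2 (hcg g hgS hg0 h hhmsg (by rw [hz, hgmod]) this).symm
  refine ⟨m, g / m, h / m, h % m, hm3, ?_, by omega, by omega, ?_, ?_, ?_⟩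
  · have := hmin g hgS hg0
    exact (Nat.one_le_div_iff (by omega)).2 this
  · rw [hdg, hdh]
    have e1 := hmono (h % m - 1) (by omega) (by omega)
    rw [show h % m - 1 + 1 = h % m by omega] at e1
    have e2 := hwle h hhmsg.1
    obtain ⟨e3, e4⟩ := hwmem (h % m - 1) (by omega)
    generalize aperyW S m (h % m - 1) = w at *
    rw [hgen] at e3
    obtain ⟨x, y, z, rfl⟩ := (mem_gen3 _ _ _ _).1 e3
    have hz : z = 0 := by
      by_contra hz
      have := Nat.mul_le_mul_right h (Nat.one_le_iff_ne_zero.2 hz)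
      omega
    subst hz
    have e5 : (x * m + y * g + 0 * h) % m = y % m := by
      rw [zero_mul, add_zero, Nat.mul_add_mod_self_right, Nat.mul_mod, hgmod]; simp
    rw [e5] at e4
    have e6 : h % m - 1 ≤ y := by rw [← e4]; exact Nat.mod_le _ _
    have := Nat.mul_le_mul_right g e6
    omega
  · rw [hdg, hdh]
    by_contra hcon
    push Not at hcon
    have e1 : (h % m * g) % m = h % m := by rw [Nat.mul_mod, hgmod]; simp
    have e2 := hcg (h % m * g) (hmul _ _ hgS) (Nat.mul_ne_zero ht0 hg0) h hhmsg e1 hcon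
    refine hhmsg.2.2 g hgS hg0 ((h % m - 1) * g) (hmul _ _ hgS)
      (Nat.mul_ne_zero (by omega) hg0) ?_
    rw [← e2.symm.symm]
    obtain ⟨k, hk⟩ : ∃ k, h % m = k + 1 := ⟨h % m - 1, by omega⟩
    rw [e2, hk] 
    rw [hk] at e2
    simp only [Nat.add_sub_cancel]
    linarith
  · rw [hdg, hdh]; exact hgen

theorem stmt9 (S : Set ℕ) :
    (IsMANS S ∧ (msg S).ncard = 3) ↔
      ∃ m a b t : ℕ, 3 ≤ m ∧ 1 ≤ a ∧ 2 ≤ t ∧ t ≤ m - 1 ∧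
        (t - 1) * (a * m + 1) < b * m + t ∧ b * m + t < t * (a * m + 1) ∧
        S = gen {m, a * m + 1, b * m + t} := by
  constructor
  · rintro ⟨h1, h2⟩
    exact forward S h1 h2
  · rintro ⟨m, a, b, t, h1, h2, h3, h4, h5, h6, rfl⟩
    exact backward m a b t h1 h2 h3 h4 h5 h6
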